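/- (L¹-in-time bound for the potential-type term via the Hardy inequality.) Fix γ ∈ (0,1/8] and δ₀ ∈ (0, γ/16]. There exists a constant C = C(γ,δ₀) such that for all 0 < T ≤ t and every function G on [T,t]×ℝ³ that is C¹ in x with G(τ,·) compactly supported for each τ and with (τ,x) ↦ G and ∇_xG continuous: ∫_T^t ( ∫_{ℝ³} log²(2+τ+|x|) G(τ,x)² w(|x|−τ) / ((1+τ+|x|)^{4−4δ₀} (1+||x|−τ|)^{2γ+4δ₀}) dx )^{1/2} dτ ≤ C T^{−γ/2} · sup_{τ ∈ [T,t]} ( ∫_{ℝ³} |∇_xG(τ,x)|² w(|x|−τ) dx )^{1/2}. -/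

import Mathlib

open MeasureTheory

noncomputable def pd (μ : Fin 4) (f : (Fin 4 → ℝ) → ℝ) (x : Fin 4 → ℝ) : ℝ :=
  fderiv ℝ f x (Pi.single μ 1)

noncomputable def pd3 (i : Fin 3) (f : (Fin 3 → ℝ) → ℝ) (x : Fin 3 → ℝ) : ℝ :=
  fderiv ℝ f x (Pi.single i 1)

noncomputable def rad (p : Fin 4 → ℝ) : ℝ := Real.sqrt (∑ i : Fin 3, (p i.succ) ^ 2)

noncomputable def rad3 (y : Fin 3 → ℝ) : ℝ := Real.sqrt (∑ i : Fin 3, (y i) ^ 2)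

noncomputable def spt (t : ℝ) (y : Fin 3 → ℝ) : Fin 4 → ℝ := ![t, y 0, y 1, y 2]

noncomputable def minkVF : Fin 11 → (Fin 4 → ℝ) → Fin 4 → ℝ :=
  ![fun _ => Pi.single 0 1,
    fun _ => Pi.single 1 1,
    fun _ => Pi.single 2 1,
    fun _ => Pi.single 3 1,
    fun p => p 1 • (Pi.single 2 1 : Fin 4 → ℝ) - p 2 • (Pi.single 1 1 : Fin 4 → ℝ),
    fun p => p 1 • (Pi.single 3 1 : Fin 4 → ℝ) - p 3 • (Pi.single 1 1 : Fin 4 → ℝ),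
    fun p => p 2 • (Pi.single 3 1 : Fin 4 → ℝ) - p 3 • (Pi.single 2 1 : Fin 4 → ℝ),
    fun p => p 0 • (Pi.single 1 1 : Fin 4 → ℝ) + p 1 • (Pi.single 0 1 : Fin 4 → ℝ),
    fun p => p 0 • (Pi.single 2 1 : Fin 4 → ℝ) + p 2 • (Pi.single 0 1 : Fin 4 → ℝ),
    fun p => p 0 • (Pi.single 3 1 : Fin 4 → ℝ) + p 3 • (Pi.single 0 1 : Fin 4 → ℝ),
    fun p => p]

noncomputable def GammaList : List (Fin 11) → ((Fin 4 → ℝ) → ℝ) → (Fin 4 → ℝ) → ℝ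
  | [] => fun f p => f p
  | k :: I => fun f p => fderiv ℝ (GammaList I f) p (minkVF k p)

noncomputable def derivNormSq (f : (Fin 4 → ℝ) → ℝ) (p : Fin 4 → ℝ) : ℝ :=
  ∑ μ : Fin 4, (pd μ f p) ^ 2

noncomputable def derivNorm (f : (Fin 4 → ℝ) → ℝ) (p : Fin 4 → ℝ) : ℝ :=
  Real.sqrt (derivNormSq f p)

noncomputable def dS (f : (Fin 4 → ℝ) → ℝ) (p : Fin 4 → ℝ) : ℝ :=
  (1 / 2) * (pd 0 f p + ∑ i : Fin 3, (p i.succ / rad p) * pd i.succ f p)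

noncomputable def dQ (f : (Fin 4 → ℝ) → ℝ) (p : Fin 4 → ℝ) : ℝ :=
  (1 / 2) * ((∑ i : Fin 3, (p i.succ / rad p) * pd i.succ f p) - pd 0 f p)

noncomputable def angSq (f : (Fin 4 → ℝ) → ℝ) (p : Fin 4 → ℝ) : ℝ :=
  (1 / 2) * (∑ i : Fin 3, ∑ j : Fin 3,
    ((p i.succ / rad p) * pd j.succ f p - (p j.succ / rad p) * pd i.succ f p) ^ 2)

noncomputable def goodNormSq (f : (Fin 4 → ℝ) → ℝ) (p : Fin 4 → ℝ) : ℝ :=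
  (dS f p) ^ 2 + angSq f p

noncomputable def goodNorm (f : (Fin 4 → ℝ) → ℝ) (p : Fin 4 → ℝ) : ℝ :=
  Real.sqrt (goodNormSq f p)

noncomputable def gradSq (f : (Fin 4 → ℝ) → ℝ) (p : Fin 4 → ℝ) : ℝ :=
  (pd 0 f p) ^ 2 + ∑ i : Fin 3, (pd i.succ f p) ^ 2

noncomputable def Lup (p : Fin 4 → ℝ) : Fin 4 → ℝ :=
  ![1, p 1 / rad p, p 2 / rad p, p 3 / rad p]

noncomputable def Llow (p : Fin 4 → ℝ) : Fin 4 → ℝ :=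
  ![-1, p 1 / rad p, p 2 / rad p, p 3 / rad p]

noncomputable def Lbup (p : Fin 4 → ℝ) : Fin 4 → ℝ :=
  ![1, -(p 1 / rad p), -(p 2 / rad p), -(p 3 / rad p)]

noncomputable def Evec : Fin 3 → (Fin 4 → ℝ) → Fin 4 → ℝ :=
  ![fun p => (p 2 / rad p) • (Pi.single 3 1 : Fin 4 → ℝ) - (p 3 / rad p) • (Pi.single 2 1 : Fin 4 → ℝ),
    fun p => (p 1 / rad p) • (Pi.single 3 1 : Fin 4 → ℝ) - (p 3 / rad p) • (Pi.single 1 1 : Fin 4 → ℝ),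
    fun p => (p 1 / rad p) • (Pi.single 2 1 : Fin 4 → ℝ) - (p 2 / rad p) • (Pi.single 1 1 : Fin 4 → ℝ)]

noncomputable def frameVF : Fin 5 → (Fin 4 → ℝ) → Fin 4 → ℝ :=
  ![Lup, Lbup, Evec 0, Evec 1, Evec 2]

noncomputable def mInv : Fin 4 → Fin 4 → ℝ :=
  fun α β => if α = β then (if α = 0 then -1 else 1) else 0

noncomputable def wgt (γ q : ℝ) : ℝ :=
  if 0 ≤ q then 1 + (1 + |q|) ^ (1 + 2 * γ) else 1 + (1 + |q|) ^ (-(γ / 2))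

noncomputable def wgt' (γ q : ℝ) : ℝ :=
  if 0 ≤ q then (1 + 2 * γ) * (1 + |q|) ^ (2 * γ) else (γ / 2) * (1 + |q|) ^ (-(γ / 2) - 1)

noncomputable def matNorm (H : (Fin 4 → ℝ) → Fin 4 → Fin 4 → ℝ) (p : Fin 4 → ℝ) : ℝ :=
  Real.sqrt (∑ α : Fin 4, ∑ β : Fin 4, (H p α β) ^ 2)

noncomputable def matLL (H : (Fin 4 → ℝ) → Fin 4 → Fin 4 → ℝ) (p : Fin 4 → ℝ) : ℝ :=
  |∑ α : Fin 4, ∑ β : Fin 4, H p α β * Llow p α * Llow p β|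

noncomputable def dmatNorm (H : (Fin 4 → ℝ) → Fin 4 → Fin 4 → ℝ) (p : Fin 4 → ℝ) : ℝ :=
  Real.sqrt (∑ c : Fin 4, ∑ α : Fin 4, ∑ β : Fin 4, (pd c (fun y => H y α β) p) ^ 2)

noncomputable def dmatLL (H : (Fin 4 → ℝ) → Fin 4 → Fin 4 → ℝ) (p : Fin 4 → ℝ) : ℝ :=
  Real.sqrt (∑ u : Fin 5,
    (∑ α : Fin 4, ∑ β : Fin 4,
      fderiv ℝ (fun y => H y α β) p (frameVF u p) * Llow p α * Llow p β) ^ 2)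

noncomputable def gdmatNorm (H : (Fin 4 → ℝ) → Fin 4 → Fin 4 → ℝ) (p : Fin 4 → ℝ) : ℝ :=
  Real.sqrt (∑ α : Fin 4, ∑ β : Fin 4, goodNormSq (fun y => H y α β) p)

noncomputable def kf (γ q : ℝ) : ℝ :=
  if 0 ≤ q then (1 - 1 / (2 * γ)) + 1 / (2 * γ) * (1 + q) ^ (2 * γ) else (1 - q)⁻¹

noncomputable def kd (γ q : ℝ) : ℝ :=
  if 0 ≤ q then (1 + q) ^ (2 * γ - 1) else ((1 - q) ^ 2)⁻¹

lemma kf_hasDerivAt {γ : ℝ} (hγ : 0 < γ) (q : ℝ) : HasDerivAt (kf γ) (kd γ q) q := by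
  have hR : ∀ p : ℝ, 0 ≤ p → HasDerivAt
      (fun q : ℝ => (1 - 1 / (2 * γ)) + 1 / (2 * γ) * (1 + q) ^ (2 * γ))
      ((1 + p) ^ (2 * γ - 1)) p := by
    intro p hp
    have h1 : HasDerivAt (fun q : ℝ => 1 + q) 1 p := by
      simpa using (hasDerivAt_id p).const_add 1
    have h2 := ((h1.rpow_const (p := 2 * γ) (Or.inl (by linarith : (0:ℝ) < 1 + p).ne')).const_mul
      (1 / (2 * γ))).const_add (1 - 1 / (2 * γ))
    refine h2.congr_deriv ?_
    field_simp
  have hL : ∀ p : ℝ, p ≤ 0 → HasDerivAt (fun q : ℝ => (1 - q)⁻¹) (((1 - p) ^ 2)⁻¹) p := by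
    intro p hp
    have h1 : HasDerivAt (fun q : ℝ => 1 - q) (-1) p := by
      simpa using (hasDerivAt_id p).const_sub 1
    have h2 := h1.inv (by linarith : (0:ℝ) < 1 - p).ne'
    refine h2.congr_deriv ?_
    rw [neg_neg, one_div]
  have z : (1 - 1 / (2 * γ)) + 1 / (2 * γ) * (1 + (0:ℝ)) ^ (2 * γ) = 1 := by simp
  rcases lt_trichotomy q 0 with h | h | h
  · have e : kd γ q = ((1 - q) ^ 2)⁻¹ := if_neg (not_le.mpr h)
    rw [e]
    refine (hL q h.le).congr_of_eventuallyEq ?_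
    filter_upwards [eventually_lt_nhds h] with y hy
    exact if_neg (not_le.mpr hy)
  · subst h
    have e : kd γ 0 = 1 := by simp [kd]
    rw [e, ← hasDerivWithinAt_univ, ← Set.Iic_union_Ici (a := (0:ℝ))]
    refine HasDerivWithinAt.union ?_ ?_
    · have := (hL 0 le_rfl).hasDerivWithinAt (s := Set.Iic 0)
      simp only [sub_zero, one_pow, inv_one] at this
      refine this.congr ?_ ?_
      · intro y hy
        rcases eq_or_lt_of_le (Set.mem_Iic.1 hy) with h | h
        · subst h; simp [kf]
        · exact if_neg (not_le.mpr h)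
      · simp [kf]
    · have := (hR 0 le_rfl).hasDerivWithinAt (s := Set.Ici 0)
      simp only [add_zero, Real.one_rpow] at this
      refine this.congr ?_ ?_
      · intro y hy
        exact if_pos hy
      · simp [kf]
  · have e : kd γ q = (1 + q) ^ (2 * γ - 1) := if_pos h.le
    rw [e]
    refine (hR q h.le).congr_of_eventuallyEq ?_
    filter_upwards [eventually_gt_nhds h] with y hy
    exact if_pos hy.le

lemma kd_pos (γ q : ℝ) : 0 < kd γ q := by
  unfold kd
  split_ifs with h
  · positivity
  · have : 0 < 1 - q := by linarith
    positivity

lemma kd_cont (γ : ℝ) : Continuous (kd γ) := by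
  have e : kd γ = fun q => if 0 ≤ q then (1 + |q|) ^ (2 * γ - 1) else ((1 + |q|) ^ 2)⁻¹ := by
    ext q
    unfold kd
    split_ifs with h
    · rw [abs_of_nonneg h]
    · rw [abs_of_neg (not_le.1 h)]; ring_nf
  rw [e]
  refine Continuous.if_le ?_ ?_ continuous_const continuous_id ?_
  · exact (continuous_const.add continuous_abs).rpow_const
      (fun q => Or.inl (by positivity : (0:ℝ) < 1 + |q|).ne')
  · exact Continuous.inv₀ (by fun_prop) (fun q => by positivity)
  · intro x hx; have hx' : x = 0 := hx.symm
    subst hx'; simp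

lemma wgt_cont (γ : ℝ) : Continuous (wgt γ) := by
  unfold wgt
  refine Continuous.if_le ?_ ?_ continuous_const continuous_id ?_
  · exact continuous_const.add ((continuous_const.add continuous_abs).rpow_const
      (fun q => Or.inl (by positivity : (0:ℝ) < 1 + |q|).ne'))
  · exact continuous_const.add ((continuous_const.add continuous_abs).rpow_const
      (fun q => Or.inl (by positivity : (0:ℝ) < 1 + |q|).ne'))
  · intro x hx; have hx' : x = 0 := hx.symm
    subst hx'; simp

lemma wgt_pos (γ q : ℝ) : 0 < wgt γ q := by
  unfold wgt
  split_ifs <;> positivity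

lemma kf_contDiff {γ : ℝ} (hγ : 0 < γ) : ContDiff ℝ 1 (kf γ) := by
  rw [contDiff_one_iff_deriv]
  have : deriv (kf γ) = kd γ := funext fun q => (kf_hasDerivAt hγ q).deriv
  exact ⟨fun q => (kf_hasDerivAt hγ q).differentiableAt, this ▸ kd_cont γ⟩

lemma kf_nonneg {γ : ℝ} (hγ : 0 < γ) (q : ℝ) : 0 ≤ kf γ q := by
  unfold kf
  split_ifs with h
  · have : (1:ℝ) ≤ (1 + q) ^ (2 * γ) := Real.one_le_rpow (by linarith) (by linarith)
    have h3 : 1 / (2 * γ) * 1 ≤ 1 / (2 * γ) * (1 + q) ^ (2 * γ) := by gcongr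
    linarith
  · have : 0 < 1 - q := by linarith
    positivity

lemma kf_sq {γ : ℝ} (hγ : 0 < γ) (hγ1 : γ ≤ 1 / 8) (q : ℝ) :
    kf γ q ^ 2 ≤ (1 / γ ^ 2) * wgt γ q * kd γ q := by
  have h0 := kf_nonneg hγ q
  by_cases h : 0 ≤ q
  · have hb : kf γ q ≤ 1 / γ * (1 + q) ^ (2 * γ) := by
      have : (1:ℝ) ≤ (1 + q) ^ (2 * γ) := Real.one_le_rpow (by linarith) (by linarith)
      rw [kf, if_pos h]
      have h1 : 1 / γ = 2 * (1 / (2 * γ)) := by field_simp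
      have h2 : 4 ≤ 1 / (2 * γ) := by rw [le_div_iff₀ (by positivity)]; linarith
      rw [h1]; nlinarith
    have hw : (1 + q) ^ (1 + 2 * γ) ≤ wgt γ q := by
      rw [wgt, if_pos h, abs_of_nonneg h]; linarith
    have hp : 0 < 1 + q := by linarith
    calc kf γ q ^ 2 ≤ (1 / γ * (1 + q) ^ (2 * γ)) ^ 2 := by gcongr
      _ = 1 / γ ^ 2 * (1 + q) ^ (1 + 2 * γ) * (1 + q) ^ (2 * γ - 1) := by
        rw [mul_assoc, ← Real.rpow_add hp, mul_pow, ← Real.rpow_natCast ((1 + q) ^ (2 * γ)),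
          ← Real.rpow_mul hp.le]
        congr 1
        · field_simp
        · congr 1; push_cast; ring
      _ ≤ _ := by
        rw [kd, if_pos h]; gcongr
  · have hp : 0 < 1 - q := by linarith
    have hw : 1 ≤ wgt γ q := by
      rw [wgt, if_neg h]; have : 0 ≤ (1 + |q|) ^ (-(γ / 2)) := by positivity
      linarith
    rw [kd, kf, if_neg h, if_neg h, inv_pow]
    have : 1 ≤ 1 / γ ^ 2 := by rw [le_div_iff₀ (by positivity)]; nlinarith
    have h2 : 1 ≤ 1 / γ ^ 2 * wgt γ q := by nlinarith
    exact le_mul_of_one_le_left (by positivity) h2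

lemma wgt_le {γ : ℝ} (hγ : 0 < γ) (q : ℝ) :
    wgt γ q * ((1 + |q|) ^ 2)⁻¹ ≤ 2 * kd γ q := by
  by_cases h : 0 ≤ q
  · rw [wgt, kd, if_pos h, if_pos h, abs_of_nonneg h]
    have hp : 0 < 1 + q := by linarith
    have : (1:ℝ) ≤ (1 + q) ^ (1 + 2 * γ) := Real.one_le_rpow (by linarith) (by linarith)
    have e : (1 + q) ^ (2 * γ - 1) = (1 + q) ^ (1 + 2 * γ) * ((1 + q) ^ 2)⁻¹ := by
      rw [← div_eq_mul_inv, ← Real.rpow_natCast, ← Real.rpow_sub hp]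
      congr 1; push_cast; ring
    rw [e, ← mul_assoc]
    gcongr
    linarith
  · rw [wgt, kd, if_neg h, if_neg h, abs_of_neg (not_le.1 h)]
    have hp : 0 < 1 - q := by linarith
    have : (1 + -q) ^ (-(γ / 2)) ≤ 1 :=
      Real.rpow_le_one_of_one_le_of_nonpos (by linarith) (by linarith)
    rw [← sub_eq_add_neg] at *
    gcongr
    linarith

lemma rad3_cont : Continuous rad3 := by
  unfold rad3; fun_prop

lemma rad3_nonneg (x : Fin 3 → ℝ) : 0 ≤ rad3 x := Real.sqrt_nonneg _

lemma rad3_smul {r : ℝ} (hr : 0 ≤ r) (x : Fin 3 → ℝ) : rad3 (r • x) = r * rad3 x := by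
  unfold rad3
  simp only [Pi.smul_apply, smul_eq_mul, mul_pow, ← Finset.mul_sum]
  rw [Real.sqrt_mul (by positivity), Real.sqrt_sq hr]

lemma rad3_pos {x : Fin 3 → ℝ} (hx : x ≠ 0) : 0 < rad3 x := by
  unfold rad3
  obtain ⟨i, hi⟩ := Function.ne_iff.1 hx
  apply Real.sqrt_pos.2
  exact Finset.sum_pos' (fun j _ => sq_nonneg _) ⟨i, Finset.mem_univ _, by
    have : x i ≠ 0 := hi
    positivity⟩

lemma fderiv_le (g : (Fin 3 → ℝ) → ℝ) (x v : Fin 3 → ℝ) :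
    |fderiv ℝ g x v| ≤ rad3 v * Real.sqrt (∑ i : Fin 3, (pd3 i g x) ^ 2) := by
  have e : fderiv ℝ g x v = ∑ i, v i * pd3 i g x := by
    conv_lhs => rw [pi_eq_sum_univ' v]
    simp [pd3, map_sum]
  rw [e, rad3, ← Real.sqrt_mul (by positivity)]
  exact Real.abs_le_sqrt (Finset.sum_mul_sq_le_sq_mul_sq _ _ _)

lemma polar_nonpos (F : (Fin 3 → ℝ) → ℝ) (hF : Integrable F)
    (h : ∀ ω : Fin 3 → ℝ, ω ≠ 0 → ∫ r in Set.Ioi (0:ℝ), r ^ 2 * F (r • ω) ≤ 0) :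
    ∫ x, F x ≤ 0 := by
  have mp := (volume : Measure (Fin 3 → ℝ)).measurePreserving_homeomorphUnitSphereProd
  have hemb := (homeomorphUnitSphereProd (Fin 3 → ℝ)).measurableEmbedding
  set Φ : Metric.sphere (0 : Fin 3 → ℝ) 1 × Set.Ioi (0:ℝ) → ℝ := fun p => F (p.2.1 • p.1.1)
    with hΦ
  have hcomp : ∀ x : ({0}ᶜ : Set (Fin 3 → ℝ)), Φ (homeomorphUnitSphereProd _ x) = F x := by
    intro x
    simp only [hΦ]
    congr 1
    have hx : ‖(x : Fin 3 → ℝ)‖ ≠ 0 := norm_ne_zero_iff.2 x.2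
    simp [smul_smul, hx]
  have hmeas : MeasurableSet ({0}ᶜ : Set (Fin 3 → ℝ)) := (measurableSet_singleton _).compl
  have hint : Integrable Φ ((volume : Measure (Fin 3 → ℝ)).toSphere.prod
      (Measure.volumeIoiPow (Module.finrank ℝ (Fin 3 → ℝ) - 1))) := by
    rw [← mp.integrable_comp_emb hemb]
    have : Φ ∘ (homeomorphUnitSphereProd _) = F ∘ Subtype.val := funext hcomp
    rw [this, ← integrableOn_iff_comap_subtypeVal hmeas]
    exact hF.integrableOn
  calc ∫ x, F x = ∫ x in ({0}ᶜ : Set (Fin 3 → ℝ)), F x := by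
        rw [restrict_compl_singleton]
    _ = ∫ x : ({0}ᶜ : Set (Fin 3 → ℝ)), F x ∂(Measure.comap Subtype.val volume) :=
        (integral_subtype_comap hmeas F).symm
    _ = ∫ x : ({0}ᶜ : Set (Fin 3 → ℝ)), Φ (homeomorphUnitSphereProd _ x)
          ∂(Measure.comap Subtype.val volume) := by simp only [hcomp]
    _ = ∫ p, Φ p ∂((volume : Measure (Fin 3 → ℝ)).toSphere.prod
      (Measure.volumeIoiPow (Module.finrank ℝ (Fin 3 → ℝ) - 1))) := mp.integral_comp hemb Φ
    _ = ∫ ω, ∫ r, Φ (ω, r) ∂(Measure.volumeIoiPow (Module.finrank ℝ (Fin 3 → ℝ) - 1))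
          ∂((volume : Measure (Fin 3 → ℝ)).toSphere) := integral_prod _ hint
    _ ≤ 0 := by
      refine integral_nonpos fun ω => ?_
      have hω : (ω : Fin 3 → ℝ) ≠ 0 := by
        intro h0
        have := ω.2
        simp [h0] at this
      refine le_trans (le_of_eq ?_) (h ω hω)
      simp only [Measure.volumeIoiPow, ENNReal.ofReal, hΦ]
      rw [integral_withDensity_eq_integral_smul,
        integral_subtype_comap measurableSet_Ioi fun a ↦ Real.toNNReal (a ^ (Module.finrank ℝ (Fin 3 → ℝ) - 1)) • F (a • ω.1)]
      · refine setIntegral_congr_fun measurableSet_Ioi fun x hx ↦ ?_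
        have := Real.coe_toNNReal _ (pow_nonneg (le_of_lt (Set.mem_Ioi.1 hx)) (Module.finrank ℝ (Fin 3 → ℝ) - 1))
        rw [NNReal.smul_def, this]
        simp
      · exact (measurable_subtype_coe.pow_const _).real_toNNReal

lemma ray {γ : ℝ} (hγ : 0 < γ) (hγ1 : γ ≤ 1 / 8) (τ : ℝ) (g : (Fin 3 → ℝ) → ℝ)
    (hg : ContDiff ℝ 1 g) (hc : HasCompactSupport g)
    (F : (Fin 3 → ℝ) → ℝ) (hF : F = fun x => kd γ (rad3 x - τ) * g x ^ 2 -
      4 / γ ^ 2 * ((∑ i : Fin 3, (pd3 i g x) ^ 2) * wgt γ (rad3 x - τ)))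
    (hFc : Continuous F) (hFs : HasCompactSupport F)
    (ω : Fin 3 → ℝ) (hω : ω ≠ 0) : ∫ r in Set.Ioi (0:ℝ), r ^ 2 * F (r • ω) ≤ 0 := by
  set a := rad3 ω with ha
  have hapos : 0 < a := rad3_pos hω
  have hemb : Topology.IsClosedEmbedding (fun r : ℝ => r • ω) :=
    isClosedEmbedding_smul_left hω
  set ψ : ℝ → ℝ := fun r => r ^ 2 * kf γ (r * a - τ) * g (r • ω) ^ 2 with hψ
  have hψc : ContDiff ℝ 1 ψ := by
    have := kf_contDiff hγ
    refine ((contDiff_id.pow 2).mul (this.comp (by fun_prop))).mul ((hg.comp (by fun_prop)).pow 2)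
  have hgs : HasCompactSupport (fun r : ℝ => g (r • ω)) := hc.comp_isClosedEmbedding hemb
  have hψs : HasCompactSupport ψ := by
    refine HasCompactSupport.mul_left ?_
    simp only [pow_two]
    exact hgs.mul_left
  have hI := hψs.integral_Ioi_deriv_eq hψc 0
  have hI0 : ∫ x in Set.Ioi (0:ℝ), deriv ψ x = 0 := by rw [hI]; simp [hψ]
  have hd : ∀ r : ℝ, deriv ψ r = (2 * r * kf γ (r * a - τ) + r ^ 2 * (kd γ (r * a - τ) * a))
      * g (r • ω) ^ 2 + r ^ 2 * kf γ (r * a - τ) *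
        (2 * g (r • ω) * fderiv ℝ g (r • ω) ω) := by
    intro r
    have h1 : HasDerivAt (fun r : ℝ => r * a - τ) a r := by
      simpa using ((hasDerivAt_id r).mul_const a).sub_const τ
    have h2 : HasDerivAt (fun r : ℝ => kf γ (r * a - τ)) (kd γ (r * a - τ) * a) r :=
      HasDerivAt.comp (h₂ := kf γ) r (kf_hasDerivAt hγ (r * a - τ)) h1
    have h3 : HasDerivAt (fun r : ℝ => r • ω) ω r := by
      simpa using (hasDerivAt_id r).smul_const ω
    have h4 : HasDerivAt (fun r : ℝ => g (r • ω)) (fderiv ℝ g (r • ω) ω) r :=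
      ((hg.differentiable one_ne_zero (r • ω)).hasFDerivAt).comp_hasDerivAt r h3
    have h5 := (((hasDerivAt_id r).pow 2).mul h2).mul (h4.pow 2)
    refine Eq.trans h5.deriv ?_
    simp
    try ring
  have hcomp : ∫ r in Set.Ioi (0:ℝ), a / 2 * (r ^ 2 * F (r • ω)) ≤ 0 := by
    refine le_of_le_of_eq ?_ hI0
    refine setIntegral_mono_on ?_ ?_ measurableSet_Ioi ?_
    · refine Integrable.integrableOn ?_
      refine Continuous.integrable_of_hasCompactSupport ?_ ?_
      · exact continuous_const.mul ((continuous_pow 2).mul (hFc.comp hemb.continuous))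
      · have : HasCompactSupport (fun r : ℝ => F (r • ω)) := hFs.comp_isClosedEmbedding hemb
        exact this.mul_left.mul_left
    · exact ((hψc.continuous_deriv le_rfl).integrable_of_hasCompactSupport hψs.deriv).integrableOn
    · intro r hr
      have hr : 0 < r := hr
      have hrad : rad3 (r • ω) = r * a := rad3_smul hr.le ω
      rw [hd, hF]
      simp only [hrad]
      have hk0 := kf_nonneg hγ (r * a - τ)
      have hks := kf_sq hγ hγ1 (r * a - τ)
      have hkd := kd_pos γ (r * a - τ)
      have hw := wgt_pos γ (r * a - τ)
      have hD := fderiv_le g (r • ω) ω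
      have hN2 := Real.sq_sqrt (show 0 ≤ ∑ i : Fin 3, (pd3 i g (r • ω)) ^ 2 by positivity)
      have hN0 := Real.sqrt_nonneg (∑ i : Fin 3, (pd3 i g (r • ω)) ^ 2)
      rw [← ha] at hD
      rw [← hN2]
      set N := Real.sqrt (∑ i : Fin 3, (pd3 i g (r • ω)) ^ 2)
      set k := kf γ (r * a - τ)
      set d := kd γ (r * a - τ)
      set w := wgt γ (r * a - τ)
      set u := g (r • ω)
      set D := fderiv ℝ g (r • ω) ω
      have s1 : -(k * (|u| * (a * N))) ≤ k * (u * D) := by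
        have : |u * D| ≤ |u| * (a * N) := by
          rw [abs_mul]; gcongr
        have h2 := neg_abs_le (u * D)
        nlinarith
      have s2 : 2 * (k * |u| * N) ≤ d * u ^ 2 / 2 + 2 / γ ^ 2 * (N ^ 2 * w) := by
        have h1 : 0 ≤ (d * |u| - 2 * k * N) ^ 2 := sq_nonneg _
        have h2 : k ^ 2 * N ^ 2 ≤ (1 / γ ^ 2 * w * d) * N ^ 2 := by gcongr
        have h3 : d * (2 * (k * |u| * N)) ≤ d * (d * u ^ 2 / 2 + 2 / γ ^ 2 * (N ^ 2 * w)) := by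
          have e : 2 / γ ^ 2 = 2 * (1 / γ ^ 2) := by ring
          rw [e]
          rw [← sq_abs u]
          generalize 1 / γ ^ 2 = c at h2 ⊢
          nlinarith only [h1, h2]
        exact le_of_mul_le_mul_left h3 hkd
      have s3 : 0 ≤ 2 * r * k * u ^ 2 := by positivity
      have e : 4 / γ ^ 2 = 2 * (2 / γ ^ 2) := by ring
      rw [e]
      have s4 : 0 ≤ r ^ 2 * a := by positivity
      have s5 := mul_le_mul_of_nonneg_left s2 s4
      have s6 := mul_le_mul_of_nonneg_left s1 (sq_nonneg r)
      nlinarith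
  rw [integral_const_mul] at hcomp
  by_contra hcon
  push Not at hcon
  have : 0 < a / 2 * ∫ r in Set.Ioi (0:ℝ), r ^ 2 * F (r • ω) := by positivity
  linarith

lemma hardy {γ : ℝ} (hγ : 0 < γ) (hγ1 : γ ≤ 1 / 8) (τ : ℝ) (g : (Fin 3 → ℝ) → ℝ)
    (hg : ContDiff ℝ 1 g) (hc : HasCompactSupport g) :
    Integrable (fun x => kd γ (rad3 x - τ) * g x ^ 2) ∧
    ∫ x, kd γ (rad3 x - τ) * g x ^ 2 ≤
      4 / γ ^ 2 * ∫ x, (∑ i : Fin 3, (pd3 i g x) ^ 2) * wgt γ (rad3 x - τ) := by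
  have hrc : Continuous fun x => rad3 x - τ := rad3_cont.sub continuous_const
  have c1 : Continuous (fun x => kd γ (rad3 x - τ) * g x ^ 2) :=
    ((kd_cont γ).comp hrc).mul (hg.continuous.pow 2)
  have c2 : Continuous (fun x => (∑ i : Fin 3, (pd3 i g x) ^ 2) * wgt γ (rad3 x - τ)) := by
    refine Continuous.mul ?_ ((wgt_cont γ).comp hrc)
    refine continuous_finsetSum _ fun i _ => Continuous.pow ?_ 2
    exact (hg.continuous_fderiv one_ne_zero).clm_apply continuous_const
  have s1 : HasCompactSupport (fun x => kd γ (rad3 x - τ) * g x ^ 2) := by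
    refine HasCompactSupport.mul_left ?_
    simp only [pow_two]
    exact hc.mul_left
  have s2 : HasCompactSupport
      (fun x => (∑ i : Fin 3, (pd3 i g x) ^ 2) * wgt γ (rad3 x - τ)) := by
    refine HasCompactSupport.mul_right ?_
    refine (hc.fderiv (𝕜 := ℝ)).mono' ?_
    intro x hx
    by_contra hcon
    have h0 : fderiv ℝ g x = 0 := image_eq_zero_of_notMem_tsupport hcon
    apply hx
    simp [pd3, h0]
  have i1 := c1.integrable_of_hasCompactSupport (μ := volume) s1
  have i2 := c2.integrable_of_hasCompactSupport (μ := volume) s2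
  refine ⟨i1, ?_⟩
  have i3 := i2.const_mul (4 / γ ^ 2)
  have := polar_nonpos _ (i1.sub i3) (ray hγ hγ1 τ g hg hc _ rfl
    (c1.sub (continuous_const.mul c2)) (s1.sub s2.mul_left))
  simp only [Pi.sub_apply] at this
  rw [integral_sub i1 i3, integral_const_mul] at this
  linarith

lemma weight_bound {γ δ τ r : ℝ} (hγ0 : 0 < γ) (hγ1 : γ ≤ 1 / 8) (hδ0 : 0 < δ)
    (hδ1 : δ ≤ γ / 16) (hτ : 0 < τ) (hr : 0 ≤ r) :
    (Real.log (2 + τ + r)) ^ 2 / ((1 + τ + r) ^ (4 - 4 * δ)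
      * (1 + |r - τ|) ^ (2 * γ + 4 * δ)) ≤
      8 / γ ^ 2 * τ ^ (-2 - γ) * ((1 + |r - τ|) ^ 2)⁻¹ := by
  set S := 1 + τ + r with hS
  set Q := 1 + |r - τ| with hQ
  have hS1 : 1 ≤ S := by linarith
  have hQ1 : 1 ≤ Q := by have := abs_nonneg (r - τ); linarith
  have hQS : Q ≤ S := by
    have : |r - τ| ≤ r + τ := abs_le.2 ⟨by linarith, by linarith⟩
    linarith
  have hS0 : 0 < S := by linarith
  have hQ0 : 0 < Q := by linarith
  have hlog : (Real.log (2 + τ + r)) ^ 2 ≤ 8 / γ ^ 2 * S ^ γ := by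
    have h1 : Real.log (2 + τ + r) ≤ (2 + τ + r) ^ (γ / 2) / (γ / 2) :=
      Real.log_le_rpow_div (by linarith) (by positivity)
    have h0 : 0 ≤ Real.log (2 + τ + r) := Real.log_nonneg (by linarith)
    have hx : 0 < 2 + τ + r := by linarith
    calc (Real.log (2 + τ + r)) ^ 2 ≤ ((2 + τ + r) ^ (γ / 2) / (γ / 2)) ^ 2 := by gcongr
      _ = 4 / γ ^ 2 * (2 + τ + r) ^ γ := by
        rw [div_pow, ← Real.rpow_natCast ((2 + τ + r) ^ (γ / 2)), ← Real.rpow_mul hx.le]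
        have : γ / 2 * ((2 : ℕ) : ℝ) = γ := by push_cast; ring
        rw [this]; field_simp; try ring
      _ ≤ 4 / γ ^ 2 * (2 * S) ^ γ := by
        gcongr; linarith
      _ = 4 / γ ^ 2 * (2 ^ γ * S ^ γ) := by rw [Real.mul_rpow (by norm_num) hS0.le]
      _ ≤ 4 / γ ^ 2 * (2 * S ^ γ) := by
        gcongr
        calc (2:ℝ) ^ γ ≤ 2 ^ (1:ℝ) :=
              Real.rpow_le_rpow_of_exponent_le (by norm_num) (by linarith)
          _ = 2 := Real.rpow_one 2
      _ = 8 / γ ^ 2 * S ^ γ := by ring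
  have hτS : S ^ (-2 - γ) ≤ τ ^ (-2 - γ) :=
    Real.rpow_le_rpow_of_nonpos hτ (by linarith) (by linarith)
  have hSQ : S ^ (-2 + 2 * γ + 4 * δ) ≤ Q ^ (-2 + 2 * γ + 4 * δ) :=
    Real.rpow_le_rpow_of_nonpos hQ0 hQS (by linarith)
  have eQ : (Q ^ 2)⁻¹ * Q ^ (2 * γ + 4 * δ) = Q ^ (-2 + 2 * γ + 4 * δ) := by
    rw [← Real.rpow_natCast, ← Real.rpow_neg hQ0.le, ← Real.rpow_add hQ0]
    congr 1; push_cast; ring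
  rw [div_le_iff₀ (by positivity)]
  calc (Real.log (2 + τ + r)) ^ 2 ≤ 8 / γ ^ 2 * S ^ γ := hlog
    _ = 8 / γ ^ 2 * (S ^ (-2 - γ) * S ^ (4 - 4 * δ) * S ^ (-2 + 2 * γ + 4 * δ)) := by
      rw [← Real.rpow_add hS0, ← Real.rpow_add hS0]
      congr 2; ring
    _ ≤ 8 / γ ^ 2 * (τ ^ (-2 - γ) * S ^ (4 - 4 * δ) * Q ^ (-2 + 2 * γ + 4 * δ)) := by
      gcongr
    _ = _ := by rw [← eQ]; ring

lemma slice {γ δ τ : ℝ} (hγ0 : 0 < γ) (hγ1 : γ ≤ 1 / 8) (hδ0 : 0 < δ)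
    (hδ1 : δ ≤ γ / 16) (hτ : 0 < τ) (g : (Fin 3 → ℝ) → ℝ)
    (hg : ContDiff ℝ 1 g) (hc : HasCompactSupport g) :
    ∫ x : Fin 3 → ℝ, (Real.log (2 + τ + rad3 x)) ^ 2 * (g x) ^ 2 * wgt γ (rad3 x - τ)
            / ((1 + τ + rad3 x) ^ (4 - 4 * δ)
                * (1 + |rad3 x - τ|) ^ (2 * γ + 4 * δ)) ≤
      64 / γ ^ 4 * τ ^ (-2 - γ) *
        ∫ x, (∑ i : Fin 3, (pd3 i g x) ^ 2) * wgt γ (rad3 x - τ) := by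
  obtain ⟨hi, hle⟩ := hardy hγ0 hγ1 τ g hg hc
  calc _ ≤ ∫ x, 16 / γ ^ 2 * τ ^ (-2 - γ) * (kd γ (rad3 x - τ) * g x ^ 2) := by
        refine integral_mono_of_nonneg (Filter.Eventually.of_forall fun x => ?_)
          (hi.const_mul _) (Filter.Eventually.of_forall fun x => ?_)
        · have h1 := rad3_nonneg x
          have h2 := wgt_pos γ (rad3 x - τ)
          simp only [Pi.zero_apply]
          positivity
        · have h1 := weight_bound hγ0 hγ1 hδ0 hδ1 hτ (rad3_nonneg x)
          have h2 := wgt_le hγ0 (rad3 x - τ)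
          have h3 := wgt_pos γ (rad3 x - τ)
          simp only
          calc _ = (Real.log (2 + τ + rad3 x)) ^ 2 / ((1 + τ + rad3 x) ^ (4 - 4 * δ)
                * (1 + |rad3 x - τ|) ^ (2 * γ + 4 * δ)) * (g x ^ 2 * wgt γ (rad3 x - τ)) := by
                ring
            _ ≤ 8 / γ ^ 2 * τ ^ (-2 - γ) * ((1 + |rad3 x - τ|) ^ 2)⁻¹
                * (g x ^ 2 * wgt γ (rad3 x - τ)) := by gcongr
            _ = 8 / γ ^ 2 * τ ^ (-2 - γ) * g x ^ 2 *
                (wgt γ (rad3 x - τ) * ((1 + |rad3 x - τ|) ^ 2)⁻¹) := by ring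
            _ ≤ 8 / γ ^ 2 * τ ^ (-2 - γ) * g x ^ 2 * (2 * kd γ (rad3 x - τ)) := by gcongr
            _ = _ := by ring
    _ = 16 / γ ^ 2 * τ ^ (-2 - γ) * ∫ x, kd γ (rad3 x - τ) * g x ^ 2 := integral_const_mul _ _
    _ ≤ 16 / γ ^ 2 * τ ^ (-2 - γ) * (4 / γ ^ 2 *
          ∫ x, (∑ i : Fin 3, (pd3 i g x) ^ 2) * wgt γ (rad3 x - τ)) := by gcongr
    _ = _ := by ring

/-- `L¹`-in-time bound for the potential-type term via the Hardy
inequality: for `γ ∈ (0,1/8]`, `δ₀ ∈ (0,γ/16]` there is `C = C(γ,δ₀)` such that for all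
`0 < T ≤ t` and all spatially `C¹`, spatially compactly supported `G` (jointly continuous
with its spatial gradient), if `M` bounds
`(∫ |∇G(τ,·)|² w(|·|−τ))^{1/2}` for all `τ ∈ [T,t]`, then
`∫_T^t (∫ log²(2+s) G² w/((1+s)^{4−4δ₀}(1+|q|)^{2γ+4δ₀}))^{1/2} dτ ≤ C T^{−γ/2} M`. -/
theorem stmt19 (γ δ₀ : ℝ) (hγ0 : 0 < γ) (hγ1 : γ ≤ 1 / 8)
    (hδ₀0 : 0 < δ₀) (hδ₀1 : δ₀ ≤ γ / 16) :
    ∃ C > (0 : ℝ), ∀ T t : ℝ, 0 < T → T ≤ t →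
      ∀ G : ℝ → (Fin 3 → ℝ) → ℝ,
        (∀ τ ∈ Set.Icc T t, ContDiff ℝ 1 (G τ) ∧ HasCompactSupport (G τ)) →
        Continuous (fun q : ℝ × (Fin 3 → ℝ) => G q.1 q.2) →
        (∀ i : Fin 3, Continuous fun q : ℝ × (Fin 3 → ℝ) => pd3 i (G q.1) q.2) →
      ∀ M : ℝ,
        (∀ τ ∈ Set.Icc T t,
          Real.sqrt (∫ x : Fin 3 → ℝ,
            (∑ i : Fin 3, (pd3 i (G τ) x) ^ 2) * wgt γ (rad3 x - τ)) ≤ M) →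
      (∫ τ in Set.Icc T t,
        Real.sqrt (∫ x : Fin 3 → ℝ,
          (Real.log (2 + τ + rad3 x)) ^ 2 * (G τ x) ^ 2 * wgt γ (rad3 x - τ)
            / ((1 + τ + rad3 x) ^ (4 - 4 * δ₀)
                * (1 + |rad3 x - τ|) ^ (2 * γ + 4 * δ₀))))
      ≤ C * T ^ (-(γ / 2)) * M := by
  refine ⟨16 / γ ^ 3, by positivity, ?_⟩
  intro T t hT hTt G hG _ _ M hM
  have hM0 : 0 ≤ M := (Real.sqrt_nonneg _).trans (hM T ⟨le_rfl, hTt⟩)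
  have hexp : -1 - γ / 2 < -1 := by linarith
  have hint := integrableOn_Ioi_rpow_of_lt hexp hT
  have hint' : IntegrableOn (fun τ : ℝ => τ ^ (-1 - γ / 2)) (Set.Icc T t) := by
    rw [integrableOn_Icc_iff_integrableOn_Ioc]
    exact hint.mono_set (fun x hx => hx.1)
  have hval : ∫ τ in Set.Icc T t, τ ^ (-1 - γ / 2) ≤ 2 / γ * T ^ (-(γ / 2)) := by
    rw [integral_Icc_eq_integral_Ioc]
    calc ∫ τ in Set.Ioc T t, τ ^ (-1 - γ / 2) ≤ ∫ τ in Set.Ioi T, τ ^ (-1 - γ / 2) := by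
          refine setIntegral_mono_set hint ?_
            (Set.Ioc_subset_Ioi_self).eventuallyLE
          filter_upwards [ae_restrict_mem measurableSet_Ioi] with x hx
          exact Real.rpow_nonneg (hT.le.trans (le_of_lt hx)) _
      _ = 2 / γ * T ^ (-(γ / 2)) := by
        rw [integral_Ioi_rpow_of_lt hexp hT]
        have : -1 - γ / 2 + 1 = -(γ / 2) := by ring
        rw [this]
        field_simp
  calc _ ≤ ∫ τ in Set.Icc T t, 8 / γ ^ 2 * M * τ ^ (-1 - γ / 2) := by
        refine integral_mono_of_nonneg
          (Filter.Eventually.of_forall fun x => Real.sqrt_nonneg _) (hint'.const_mul _) ?_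
        filter_upwards [ae_restrict_mem measurableSet_Icc] with τ hτ
        have hτ0 : 0 < τ := hT.trans_le hτ.1
        obtain ⟨hg, hc⟩ := hG τ hτ
        have hs := slice hγ0 hγ1 hδ₀0 hδ₀1 hτ0 (G τ) hg hc
        refine (Real.sqrt_le_sqrt hs).trans ?_
        have e : 64 / γ ^ 4 * τ ^ (-2 - γ) = (8 / γ ^ 2 * τ ^ (-1 - γ / 2)) ^ 2 := by
          rw [mul_pow, ← Real.rpow_natCast (τ ^ (-1 - γ / 2)), ← Real.rpow_mul hτ0.le]
          congr 1
          · ring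
          · congr 1; push_cast; ring
        rw [e, Real.sqrt_mul (sq_nonneg _), Real.sqrt_sq (by positivity)]
        calc _ ≤ 8 / γ ^ 2 * τ ^ (-1 - γ / 2) * M := by
              gcongr
              exact hM τ hτ
          _ = _ := by ring
    _ = 8 / γ ^ 2 * M * ∫ τ in Set.Icc T t, τ ^ (-1 - γ / 2) := integral_const_mul _ _
    _ ≤ 8 / γ ^ 2 * M * (2 / γ * T ^ (-(γ / 2))) := by gcongr
    _ = _ := by ring
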